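/- arXiv:math/0202288 — 3 statements merged into one kernel-verified Lean document; each statement's English description precedes it below -/
import Mathlib

section
/- The polynomials φ(τ² − ρσ₂), φ(τσ₃) and φ(ρσ₃) lie in the ideal J = (q₁ℓ₁, q₂ℓ₂, q₃ℓ₃) of P, so that φ induces a ℂ-algebra homomorphism ℂ[b,σ₁,ρ,σ₂,τ,σ₃]/(τ²−ρσ₂, τσ₃, ρσ₃) → P/J; this induced homomorphism is injective. -/
open MvPolynomial

noncomputable section

/-- `R = ℂ[b,σ₁,ρ,σ₂,τ,σ₃]`, with variables `0 = b`, `1 = σ₁`, `2 = ρ`, `3 = σ₂`,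
`4 = τ`, `5 = σ₃`. -/
abbrev R6 : Type := MvPolynomial (Fin 6) ℂ

/-- `P = ℂ[b,q₁,q₂,q₃,ℓ₁,ℓ₂,ℓ₃]`, with variables `0 = b`, `1 = q₁`, `2 = q₂`, `3 = q₃`,
`4 = ℓ₁`, `5 = ℓ₂`, `6 = ℓ₃`. -/
abbrev P7 : Type := MvPolynomial (Fin 7) ℂ

def ρ : R6 := X 2
def σ₂ : R6 := X 3
def τ : R6 := X 4
def σ₃ : R6 := X 5

/-- The `ℂ`-algebra homomorphism `φ : ℂ[b,σ₁,ρ,σ₂,τ,σ₃] → ℂ[b,q₁,q₂,q₃,ℓ₁,ℓ₂,ℓ₃]` with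
`φ(b) = b`, `φ(σ₁) = ℓ₁+ℓ₂+ℓ₃`, `φ(ρ) = q₁²+q₂²+q₃²−2(q₁q₂+q₁q₃+q₂q₃)`,
`φ(σ₂) = ℓ₁²+ℓ₂²+ℓ₃²−2(ℓ₁ℓ₂+ℓ₁ℓ₃+ℓ₂ℓ₃)`, `φ(τ) = ℓ₁(q₃−q₂)+ℓ₂(q₁−q₃)+ℓ₃(q₂−q₁)`,
`φ(σ₃) = ℓ₁ℓ₂ℓ₃`. -/
def φ : R6 →ₐ[ℂ] P7 :=
  aeval ![X 0,
    X 4 + X 5 + X 6,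
    X 1 ^ 2 + X 2 ^ 2 + X 3 ^ 2 - 2 * (X 1 * X 2 + X 1 * X 3 + X 2 * X 3),
    X 4 ^ 2 + X 5 ^ 2 + X 6 ^ 2 - 2 * (X 4 * X 5 + X 4 * X 6 + X 5 * X 6),
    X 4 * (X 3 - X 2) + X 5 * (X 1 - X 3) + X 6 * (X 2 - X 1),
    X 4 * X 5 * X 6]

/-- The ideal `J = (q₁ℓ₁, q₂ℓ₂, q₃ℓ₃)` of `P`. -/
def J : Ideal P7 := Ideal.span {X 1 * X 4, X 2 * X 5, X 3 * X 6}

/-- The ideal `(τ²−ρσ₂, τσ₃, ρσ₃)` of `R`. -/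
def I : Ideal R6 := Ideal.span {τ ^ 2 - ρ * σ₂, τ * σ₃, ρ * σ₃}

/-!
`(τ² − ρσ₂, τσ₃, ρσ₃)` is the intersection of the prime ideals `(ρ, τ)` and `(τ² − ρσ₂, σ₃)`. Over
an algebraically closed field of characteristic not two, every zero of either prime is the image of
a zero of `J`: on the first, take `q = 0` and let the `ℓᵢ` be the roots of a cubic; on the second,
take `q₁ = q₂ = ℓ₃ = 0`, with `q₃` and `ℓ₁ − ℓ₂` square roots of `ρ` and `σ₂`. By the
Nullstellensatz a polynomial with image in `J` then lies in both primes.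
-/

theorem span_singleton_inf_eq_mul {A : Type*} [CommRing A] {P : Ideal A} [P.IsPrime] {s : A}
    (hs : s ∉ P) : Ideal.span {s} ⊓ P = Ideal.span {s} * P := by
  refine le_antisymm ?_ Ideal.mul_le_inf
  rintro f ⟨hf, hfP⟩
  obtain ⟨a, rfl⟩ := Ideal.mem_span_singleton'.mp hf
  have ha : a ∈ P := (Ideal.IsPrime.mem_or_mem ‹_› hfP).resolve_right hs
  exact mul_comm s a ▸ Ideal.mul_mem_mul (Ideal.mem_span_singleton_self s) ha

section KillVars

variable {ι R : Type*} [CommRing R]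

variable (R) in
/-- The substitution that sets the variables in `s` to zero and fixes the others. It is used to show
that adding the variables in `s` to a prime ideal that it stabilizes gives a prime ideal. -/
def killVars (s : Set ι) : MvPolynomial ι R →ₐ[R] MvPolynomial ι R :=
  aeval (sᶜ.indicator X)

theorem killVars_X_of_mem {s : Set ι} {i : ι} (hi : i ∈ s) : killVars R s (X i) = 0 := by
  rw [killVars, aeval_X, Set.indicator_of_notMem (Set.notMem_compl_iff.mpr hi)]

theorem killVars_X_of_notMem {s : Set ι} {i : ι} (hi : i ∉ s) : killVars R s (X i) = X i := by
  rw [killVars, aeval_X, Set.indicator_of_mem (Set.mem_compl hi)]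

theorem sub_killVars_mem_span_X_image (s : Set ι) (f : MvPolynomial ι R) :
    f - killVars R s f ∈ Ideal.span (X '' s) := by
  have hcomp : (Ideal.Quotient.mkₐ R (Ideal.span (X '' s))).comp (killVars R s) =
      Ideal.Quotient.mkₐ R (Ideal.span (X '' s)) := by
    ext i
    by_cases hi : i ∈ s
    · have hX : X i ∈ Ideal.span (X '' s : Set (MvPolynomial ι R)) :=
        Ideal.subset_span (Set.mem_image_of_mem X hi)
      simpa [killVars_X_of_mem hi] using (Ideal.Quotient.eq_zero_iff_mem.mpr hX).symm
    · simp [killVars_X_of_notMem hi]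
  exact Ideal.Quotient.eq.mp (DFunLike.congr_fun hcomp f).symm

theorem comap_killVars {P : Ideal (MvPolynomial ι R)} {s : Set ι}
    (hP : P ≤ P.comap (killVars R s)) :
    P.comap (killVars R s) = P ⊔ Ideal.span (X '' s) := by
  refine le_antisymm (fun f hf => ?_) (sup_le hP (Ideal.span_le.mpr ?_))
  · exact add_sub_cancel (killVars R s f) f ▸
      Ideal.add_mem _ (Ideal.mem_sup_left hf)
        (Ideal.mem_sup_right (sub_killVars_mem_span_X_image s f))
  · rintro _ ⟨i, hi, rfl⟩
    exact Ideal.mem_comap.mpr (killVars_X_of_mem (R := R) hi ▸ P.zero_mem)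

theorem isPrime_sup_span_X_image {P : Ideal (MvPolynomial ι R)} [P.IsPrime] {s : Set ι}
    (hP : P ≤ P.comap (killVars R s)) : (P ⊔ Ideal.span (X '' s)).IsPrime :=
  comap_killVars hP ▸ Ideal.IsPrime.comap (killVars R s)

theorem isPrime_span_X_image [IsDomain R] (s : Set ι) :
    (Ideal.span (X '' s : Set (MvPolynomial ι R))).IsPrime :=
  bot_sup_eq (Ideal.span (X '' s : Set (MvPolynomial ι R))) ▸ isPrime_sup_span_X_image bot_le

theorem X_mem_span_X_image_iff [Nontrivial R] {s : Set ι} {i : ι} :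
    X i ∈ Ideal.span (X '' s : Set (MvPolynomial ι R)) ↔ i ∈ s := by
  classical
  simp [mem_ideal_span_X_image, support_X, Finsupp.single_apply]

end KillVars

theorem prime_X_sq_sub_X_mul_X {ι R : Type*} [CommRing R] [IsDomain R]
    [UniqueFactorizationMonoid R] {i j k : ι} (hij : i ≠ j) (hik : i ≠ k) (hjk : j ≠ k) :
    Prime (X i ^ 2 - X j * X k : MvPolynomial ι R) := by
  classical
  have hdvd : ¬ (X j : MvPolynomial ι R) ∣ X i ^ 2 := fun h =>
    hij (X_dvd_X.mp (X_prime.dvd_of_dvd_pow h)).symm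
  have hrel : IsRelPrime (-X j : MvPolynomial ι R) (X i ^ 2) :=
    IsRelPrime.neg_left (X_prime.irreducible.isRelPrime_iff_not_dvd.mpr hdvd)
  have hirr : Irreducible (-X j * X k + X i ^ 2 : MvPolynomial ι R) := by
    refine irreducible_mul_X_add _ _ k (neg_ne_zero.mpr (X_ne_zero j)) ?_ (fun h => ?_) hrel
    · simpa [vars_neg] using hjk.symm
    · simpa using hik (Finset.mem_singleton.mp (vars_X (R := R) ▸ vars_pow _ 2 h)).symm
  rw [sub_eq_neg_add, ← neg_mul]
  exact hirr.prime

section AlgClosed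

variable {K : Type*} [Field K] [IsAlgClosed K]

theorem exists_add_eq_and_mul_eq (e₁ e₂ e₃ : K) :
    ∃ u v w : K, u + v + w = e₁ ∧ u * v + u * w + v * w = e₂ ∧ u * v * w = e₃ := by
  let p : Cubic K := ⟨1, -e₁, e₂, -e₃⟩
  have ha : p.a ≠ 0 := one_ne_zero
  obtain ⟨u, v, w, hroots⟩ :=
    (Cubic.splits_iff_roots_eq_three ha).mp (IsAlgClosed.splits (p.toPoly.map (RingHom.id K)))
  refine ⟨u, v, w, ?_, ?_, ?_⟩
  · exact neg_inj.mp (by simpa only [p, RingHom.id_apply, one_mul] using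
      (Cubic.b_eq_three_roots ha hroots).symm)
  · simpa only [p, RingHom.id_apply, one_mul] using (Cubic.c_eq_three_roots ha hroots).symm
  · exact neg_inj.mp (by simpa only [p, RingHom.id_apply, one_mul] using
      (Cubic.d_eq_three_roots ha hroots).symm)

theorem exists_sq_eq_and_sq_eq_and_mul_eq {r s t : K} (h : t ^ 2 = r * s) :
    ∃ w v : K, w ^ 2 = r ∧ v ^ 2 = s ∧ w * v = t := by
  obtain ⟨w, hw⟩ := IsAlgClosed.exists_pow_nat_eq r two_pos
  obtain ⟨v, hv⟩ := IsAlgClosed.exists_pow_nat_eq s two_pos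
  have hsq : (w * v) ^ 2 = t ^ 2 := by rw [mul_pow, hw, hv, h]
  rcases sq_eq_sq_iff_eq_or_eq_neg.mp hsq with hwv | hwv
  · exact ⟨w, v, hw, hv, hwv⟩
  · exact ⟨w, -v, hw, by rw [neg_sq, hv], by rw [mul_neg, hwv, neg_neg]⟩

theorem comap_le_of_forall_exists_zeroLocus {k ι κ : Type*} [Field k] [Algebra k K] [Finite ι]
    {P : Ideal (MvPolynomial ι k)} [P.IsPrime] {Q : Ideal (MvPolynomial κ k)}
    {f : MvPolynomial ι k →ₐ[k] MvPolynomial κ k}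
    (h : ∀ c ∈ zeroLocus K P, ∃ d ∈ zeroLocus K Q, ∀ i, aeval d (f (X i)) = c i) :
    Q.comap f ≤ P := by
  rw [← IsPrime.vanishingIdeal_zeroLocus (K := K) P]
  intro x hx c hc
  obtain ⟨d, hd, hdc⟩ := h c hc
  have hcomp : aeval c = (aeval d).comp f := by
    ext i
    rw [aeval_X, AlgHom.comp_apply, hdc]
  rw [hcomp]
  exact hd _ hx

end AlgClosed

section CommRing

variable (R : Type*) [CommRing R]

/-- The homomorphism `φ` with coefficients in `R`, with the variables numbered as in `φ`. -/
def phi : MvPolynomial (Fin 6) R →ₐ[R] MvPolynomial (Fin 7) R :=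
  aeval ![X 0,
    X 4 + X 5 + X 6,
    X 1 ^ 2 + X 2 ^ 2 + X 3 ^ 2 - 2 * (X 1 * X 2 + X 1 * X 3 + X 2 * X 3),
    X 4 ^ 2 + X 5 ^ 2 + X 6 ^ 2 - 2 * (X 4 * X 5 + X 4 * X 6 + X 5 * X 6),
    X 4 * (X 3 - X 2) + X 5 * (X 1 - X 3) + X 6 * (X 2 - X 1),
    X 4 * X 5 * X 6]

/-- The ideal `J = (q₁ℓ₁, q₂ℓ₂, q₃ℓ₃)` with coefficients in `R`. -/
def pairIdeal : Ideal (MvPolynomial (Fin 7) R) :=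
  Ideal.span {X 1 * X 4, X 2 * X 5, X 3 * X 6}

/-- The ideal `(τ² − ρσ₂, τσ₃, ρσ₃)` with coefficients in `R`. -/
def relationIdeal : Ideal (MvPolynomial (Fin 6) R) :=
  Ideal.span {X 4 ^ 2 - X 2 * X 3, X 4 * X 5, X 2 * X 5}

variable {R}

theorem mem_pairIdeal_iff {f : MvPolynomial (Fin 7) R} :
    f ∈ pairIdeal R ↔
      ∃ a b c, a * (X 1 * X 4) + b * (X 2 * X 5) + c * (X 3 * X 6) = f :=
  Submodule.mem_span_triple

theorem phi_sq_sub_mul_mem_pairIdeal : phi R (X 4 ^ 2 - X 2 * X 3) ∈ pairIdeal R := by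
  -- With `n = q × ℓ` and `B` the polar form of `ρ`, `τ² − ρσ₂ = 2 ∑ nᵢ² − (τ² + B(q, ℓ)²)`, and
  -- modulo `J` both terms are congruent to `2 ∑ qᵢ²ℓⱼ²`, the sum being over `i ≠ j`.
  refine mem_pairIdeal_iff.mpr
    ⟨2 * X 1 * (X 5 + X 6) + 2 * X 4 * (X 2 + X 3) - X 1 * X 4
      - 2 * (X 2 * X 6 + X 3 * X 5) - 3 * (X 2 * X 5 + X 3 * X 6),
    2 * X 2 * (X 4 + X 6) + 2 * X 5 * (X 1 + X 3) - X 2 * X 5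
      - 2 * (X 1 * X 6 + X 3 * X 4) - 3 * (X 1 * X 4 + X 3 * X 6),
    2 * X 3 * (X 4 + X 5) + 2 * X 6 * (X 1 + X 2) - X 3 * X 6
      - 2 * (X 1 * X 5 + X 2 * X 4) - 3 * (X 1 * X 4 + X 2 * X 5), ?_⟩
  simp only [phi, map_sub, map_pow, map_mul, aeval_X, Matrix.cons_val]
  ring

theorem phi_X_four_mul_X_five_mem_pairIdeal : phi R (X 4 * X 5) ∈ pairIdeal R := by
  refine mem_pairIdeal_iff.mpr
    ⟨X 5 * X 6 * (X 5 - X 6), X 4 * X 6 * (X 6 - X 4), X 4 * X 5 * (X 4 - X 5), ?_⟩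
  simp only [phi, map_mul, aeval_X, Matrix.cons_val]
  ring

theorem phi_X_two_mul_X_five_mem_pairIdeal : phi R (X 2 * X 5) ∈ pairIdeal R := by
  refine mem_pairIdeal_iff.mpr
    ⟨X 5 * X 6 * (X 1 - 2 * X 2), X 4 * X 6 * (X 2 - 2 * X 3), X 4 * X 5 * (X 3 - 2 * X 1), ?_⟩
  simp only [phi, map_mul, aeval_X, Matrix.cons_val]
  ring

theorem isPrime_span_X_two_X_four [IsDomain R] :
    (Ideal.span {X 2, X 4} : Ideal (MvPolynomial (Fin 6) R)).IsPrime := by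
  rw [← Set.image_pair]
  exact isPrime_span_X_image {2, 4}

theorem isPrime_span_sq_sub_mul_X_five [IsDomain R] [UniqueFactorizationMonoid R] :
    (Ideal.span {X 4 ^ 2 - X 2 * X 3, X 5} : Ideal (MvPolynomial (Fin 6) R)).IsPrime := by
  have hprime : Prime (X 4 ^ 2 - X 2 * X 3 : MvPolynomial (Fin 6) R) :=
    prime_X_sq_sub_X_mul_X (by decide) (by decide) (by decide)
  have := (Ideal.span_singleton_prime hprime.ne_zero).mpr hprime
  have hkill : killVars R {5} (X 4 ^ 2 - X 2 * X 3 : MvPolynomial (Fin 6) R) =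
      X 4 ^ 2 - X 2 * X 3 := by
    simp [killVars_X_of_notMem]
  rw [Ideal.span_insert, ← Set.image_singleton (f := X) (a := (5 : Fin 6))]
  refine isPrime_sup_span_X_image ((Ideal.span_singleton_le_iff_mem _).mpr ?_)
  rw [Ideal.mem_comap, hkill]
  exact Ideal.mem_span_singleton_self _

theorem relationIdeal_eq_inf [IsDomain R] :
    relationIdeal R = Ideal.span {X 4 ^ 2 - X 2 * X 3, X 5} ⊓ Ideal.span {X 2, X 4} := by
  have := isPrime_span_X_two_X_four (R := R)
  have hrel : (X 4 ^ 2 - X 2 * X 3 : MvPolynomial (Fin 6) R) ∈ Ideal.span {X 2, X 4} :=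
    Ideal.mem_span_pair.mpr ⟨-X 3, X 4, by ring⟩
  have hX : (X 5 : MvPolynomial (Fin 6) R) ∉ Ideal.span {X 2, X 4} := by
    rw [← Set.image_pair, X_mem_span_X_image_iff]
    decide
  rw [relationIdeal, Ideal.span_insert, Ideal.span_insert (X 4 ^ 2 - X 2 * X 3),
    sup_inf_assoc_of_le _ ((Ideal.span_singleton_le_iff_mem _).mpr hrel),
    span_singleton_inf_eq_mul hX, Ideal.span_mul_span', Set.singleton_mul, Set.image_pair,
    Set.pair_comm, mul_comm (X 5), mul_comm (X 5)]

end CommRing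

section Lifting

variable {k K : Type*} [Field k] [Field K] [Algebra k K]

theorem mem_zeroLocus_pairIdeal_iff {d : Fin 7 → K} :
    d ∈ zeroLocus K (pairIdeal k) ↔ d 1 * d 4 = 0 ∧ d 2 * d 5 = 0 ∧ d 3 * d 6 = 0 := by
  simp [pairIdeal, zeroLocus_span]

theorem aeval_phi_X (d : Fin 7 → K) (i : Fin 6) :
    aeval d (phi k (X i)) = ![d 0,
      d 4 + d 5 + d 6,
      d 1 ^ 2 + d 2 ^ 2 + d 3 ^ 2 - 2 * (d 1 * d 2 + d 1 * d 3 + d 2 * d 3),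
      d 4 ^ 2 + d 5 ^ 2 + d 6 ^ 2 - 2 * (d 4 * d 5 + d 4 * d 6 + d 5 * d 6),
      d 4 * (d 3 - d 2) + d 5 * (d 1 - d 3) + d 6 * (d 2 - d 1),
      d 4 * d 5 * d 6] i := by
  fin_cases i <;> simp [phi]

variable [IsAlgClosed K] [NeZero (2 : K)]

theorem exists_lift_of_mem_zeroLocus_X_two_X_four {c : Fin 6 → K}
    (hc : c ∈ zeroLocus K (Ideal.span {X 2, X 4} : Ideal (MvPolynomial (Fin 6) k))) :
    ∃ d ∈ zeroLocus K (pairIdeal k), ∀ i, aeval d (phi k (X i)) = c i := by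
  obtain ⟨hc₂, hc₄⟩ : c 2 = 0 ∧ c 4 = 0 := by simpa [zeroLocus_span] using hc
  obtain ⟨u, v, w, h₁, h₂, h₃⟩ :=
    exists_add_eq_and_mul_eq (c 1) ((c 1 ^ 2 - c 3) / 2 ^ 2) (c 5)
  have hc₃ : u ^ 2 + v ^ 2 + w ^ 2 - 2 * (u * v + u * w + v * w) = c 3 := by
    have hdiscr : 2 ^ 2 * (u * v + u * w + v * w) = c 1 ^ 2 - c 3 := by
      rw [h₂]
      field_simp
    linear_combination (u + v + w + c 1) * h₁ - hdiscr
  refine ⟨![c 0, 0, 0, 0, u, v, w], mem_zeroLocus_pairIdeal_iff.mpr (by simp), fun i => ?_⟩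
  rw [aeval_phi_X]
  fin_cases i <;> simp [hc₂, hc₄, h₁, h₃, hc₃]

theorem exists_lift_of_mem_zeroLocus_sq_sub_mul_X_five {c : Fin 6 → K}
    (hc : c ∈ zeroLocus K
      (Ideal.span {X 4 ^ 2 - X 2 * X 3, X 5} : Ideal (MvPolynomial (Fin 6) k))) :
    ∃ d ∈ zeroLocus K (pairIdeal k), ∀ i, aeval d (phi k (X i)) = c i := by
  obtain ⟨hrel, hc₅⟩ : c 4 ^ 2 = c 2 * c 3 ∧ c 5 = 0 := by
    simpa [zeroLocus_span, sub_eq_zero] using hc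
  obtain ⟨w, v, hw, hv, hwv⟩ := exists_sq_eq_and_sq_eq_and_mul_eq hrel
  obtain ⟨l, m, hadd, hsub⟩ : ∃ l m : K, l + m = c 1 ∧ l - m = v :=
    ⟨(c 1 + v) / 2, (c 1 - v) / 2, by field_simp; ring, by field_simp; ring⟩
  have hc₃ : l ^ 2 + m ^ 2 - 2 * (l * m) = c 3 := by
    rw [← hv, ← hsub]
    ring
  have hc₄ : l * w + -(m * w) = c 4 := by
    rw [← hwv, ← hsub]
    ring
  refine ⟨![c 0, 0, 0, w, l, m, 0], mem_zeroLocus_pairIdeal_iff.mpr (by simp), fun i => ?_⟩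
  rw [aeval_phi_X]
  fin_cases i <;> simp [hw, hc₅, hadd, hc₃, hc₄]

end Lifting

theorem comap_phi_pairIdeal_le (k : Type*) [Field k] [NeZero (2 : k)] :
    (pairIdeal k).comap (phi k) ≤ relationIdeal k := by
  have : NeZero (2 : AlgebraicClosure k) :=
    ⟨by simpa only [map_ofNat] using
      (map_ne_zero (algebraMap k (AlgebraicClosure k))).mpr (two_ne_zero (α := k))⟩
  have := isPrime_span_X_two_X_four (R := k)
  have := isPrime_span_sq_sub_mul_X_five (R := k)
  rw [relationIdeal_eq_inf]
  exact le_inf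
    (comap_le_of_forall_exists_zeroLocus (K := AlgebraicClosure k) fun _ =>
      exists_lift_of_mem_zeroLocus_sq_sub_mul_X_five)
    (comap_le_of_forall_exists_zeroLocus (K := AlgebraicClosure k) fun _ =>
      exists_lift_of_mem_zeroLocus_X_two_X_four)

theorem stmt5_general (k : Type*) [Field k] [NeZero (2 : k)] :
    (phi k (X 4 ^ 2 - X 2 * X 3) ∈ pairIdeal k ∧ phi k (X 4 * X 5) ∈ pairIdeal k ∧
      phi k (X 2 * X 5) ∈ pairIdeal k) ∧
    (∀ x, phi k x ∈ pairIdeal k → x ∈ relationIdeal k) :=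
  ⟨⟨phi_sq_sub_mul_mem_pairIdeal, phi_X_four_mul_X_five_mem_pairIdeal,
    phi_X_two_mul_X_five_mem_pairIdeal⟩, fun _ hx => comap_phi_pairIdeal_le k hx⟩

/-- The polynomials `φ(τ²−ρσ₂)`, `φ(τσ₃)` and `φ(ρσ₃)` lie in the ideal
`J = (q₁ℓ₁, q₂ℓ₂, q₃ℓ₃)` of `P`, so that `φ` induces a `ℂ`-algebra homomorphism
`ℂ[b,σ₁,ρ,σ₂,τ,σ₃]/(τ²−ρσ₂, τσ₃, ρσ₃) → P/J`; this induced homomorphism is injective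
(i.e. `φ x ∈ J` implies `x ∈ (τ²−ρσ₂, τσ₃, ρσ₃)`). -/
theorem stmt5 :
    (φ (τ ^ 2 - ρ * σ₂) ∈ J ∧ φ (τ * σ₃) ∈ J ∧ φ (ρ * σ₃) ∈ J) ∧
    (∀ x : R6, φ x ∈ J → x ∈ I) :=
  stmt5_general ℂ

end
end

section
/- For every integer n ≥ 0, the image under φ of the ideal (τ²−ρσ₂, τσ₃, ρσ₃) + (the five components of G_{n+1}) of ℂ[b,σ₁,ρ,σ₂,τ,σ₃] is contained in the ideal (q₁ℓ₁, q₂ℓ₂, q₃ℓ₃) + (the four components of R_{n+1}) of P; consequently φ induces a ℂ-algebra homomorphism ℂ[b,σ₁,ρ,σ₂,τ,σ₃]/(τ²−ρσ₂, τσ₃, ρσ₃, G_{n+1}) → P/(q₁ℓ₁, q₂ℓ₂, q₃ℓ₃, R_{n+1}). -/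
open MvPolynomial

noncomputable section

def σ₁ : R6 := X 1
/-- The 5×5 matrix `A` over `ℂ[b,σ₁,ρ,σ₂,τ,σ₃]`. -/
def A5 : Matrix (Fin 5) (Fin 5) R6 :=
  !![X 0 + σ₁, 0, 9 * ρ + C (1/4 : ℂ) * (σ₂ - σ₁ ^ 2) + 3 * τ, 0, σ₃;
     0, X 0 + C (1/2 : ℂ) * σ₁, 4 * ρ + C (1/2 : ℂ) * τ, ρ, -(C (1/2 : ℂ) * σ₁ * ρ);
     1, 0, X 0, 0, 0;
     0, 1, 0, X 0, 0;
     0, 0, 1, 1, X 0]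

/-- `G₁ = (bσ₁+18ρ+(1/2)(σ₂+σ₁²)+6τ, 9ρ+τ, 2b+σ₁, b, 3)ᵀ`. -/
def G1 : Fin 5 → R6 :=
  ![X 0 * σ₁ + 18 * ρ + C (1/2 : ℂ) * (σ₂ + σ₁ ^ 2) + 6 * τ, 9 * ρ + τ, 2 * X 0 + σ₁,
    X 0, 3]

/-- `G_{n+1} = Aⁿ·G₁`. -/
def G (n : ℕ) : Fin 5 → R6 := (A5 ^ n).mulVec G1

/-- The 4×4 matrix `E` over `ℂ[b,q₁,q₂,q₃,ℓ₁,ℓ₂,ℓ₃]` (with `θ₁=q₃−q₂`, `θ₂=q₁−q₃`,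
`θ₃=q₂−q₁`). -/
def E4 : Matrix (Fin 4) (Fin 4) P7 :=
  !![X 0, X 1 * (X 1 - 5 * (X 2 + X 3)), X 2 * (X 2 - 5 * (X 1 + X 3)),
       X 3 * (X 3 - 5 * (X 1 + X 2));
     1, X 4 + X 0 + 3 * (X 3 - X 2), -X 2, X 3;
     1, X 1, X 5 + X 0 + 3 * (X 1 - X 3), -X 3;
     1, -X 1, X 2, X 6 + X 0 + 3 * (X 2 - X 1)]

/-- `R_{n+1} = Eⁿ·(b,1,1,1)ᵀ`. -/
def Rv (n : ℕ) : Fin 4 → P7 := (E4 ^ n).mulVec ![X 0, 1, 1, 1]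

/-- The ideal `(τ²−ρσ₂, τσ₃, ρσ₃, G_{n+1})` of `ℂ[b,σ₁,ρ,σ₂,τ,σ₃]`. -/
def Isrc (n : ℕ) : Ideal R6 :=
  Ideal.span ({τ ^ 2 - ρ * σ₂, τ * σ₃, ρ * σ₃} ∪ Set.range (G n))

/-- The ideal `(q₁ℓ₁, q₂ℓ₂, q₃ℓ₃, R_{n+1})` of `ℂ[b,q₁,q₂,q₃,ℓ₁,ℓ₂,ℓ₃]`. -/
def Jtgt (n : ℕ) : Ideal P7 :=
  Ideal.span ({X 1 * X 4, X 2 * X 5, X 3 * X 6} ∪ Set.range (Rv n))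

/- An explicit `5 × 4` matrix `D` satisfies `φ(A) D ≡ D E` modulo `(q₁ℓ₁, q₂ℓ₂, q₃ℓ₃)` and
`φ(G₁) = D r₁`. Hence `φ(Aⁿ G₁) ≡ φ(A)ⁿ D r₁ ≡ D Eⁿ r₁`, so each component of `φ(G_{n+1})` is,
modulo `(q₁ℓ₁, q₂ℓ₂, q₃ℓ₃)`, a linear combination of the components of `R_{n+1}`. Everything in
sight is invariant under simultaneous cyclic rotation of the `qᵢ` and of the `ℓᵢ`, so only one
nontrivial column of `φ(A) D ≡ D E` has to be verified. -/

open scoped Matrix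

section Intertwining

variable {m k : Type*} [Fintype m] [DecidableEq m] [Fintype k] [DecidableEq k]

theorem pow_mul_eq_mul_pow_of_mul_eq_mul {S : Type*} [Semiring S] {A : Matrix m m S}
    {E : Matrix k k S} {D : Matrix m k S} (h : A * D = D * E) (n : ℕ) :
    A ^ n * D = D * E ^ n := by
  induction n with
  | zero => simp
  | succ n ih =>
    rw [pow_succ, Matrix.mul_assoc, h, ← Matrix.mul_assoc, ih, Matrix.mul_assoc, pow_succ]

variable {R P : Type*} [CommRing R] [CommRing P] {f : R →+* P} {I : Ideal P}
  {A : Matrix m m R} {E : Matrix k k P} {D : Matrix m k P} {v : m → R} {w : k → P}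

theorem map_pow_mulVec_smodEq
    (hD : ∀ i j, (A.map f * D) i j ≡ (D * E) i j [SMOD I])
    (hv : ∀ i, f (v i) ≡ (D *ᵥ w) i [SMOD I]) (n : ℕ) (i : m) :
    f ((A ^ n *ᵥ v) i) ≡ (D *ᵥ (E ^ n *ᵥ w)) i [SMOD I] := by
  let π := Ideal.Quotient.mk I
  have hD' : (A.map f).map π * D.map π = D.map π * E.map π := by
    rw [← Matrix.map_mul, ← Matrix.map_mul]
    exact Matrix.ext hD
  have hpow : ((A ^ n).map f * D).map π = (D * E ^ n).map π := by
    simpa only [Matrix.map_mul, Matrix.map_pow] using pow_mul_eq_mul_pow_of_mul_eq_mul hD' n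
  have hv' : π ∘ f ∘ v = D.map π *ᵥ (π ∘ w) :=
    funext fun i => (SModEq.idealQuotientMk.mp (hv i)).trans (RingHom.map_mulVec π D w i)
  change π (f ((A ^ n *ᵥ v) i)) = π ((D *ᵥ (E ^ n *ᵥ w)) i)
  rw [Matrix.mulVec_mulVec, RingHom.map_mulVec, RingHom.map_mulVec, RingHom.map_mulVec, hv',
    Matrix.mulVec_mulVec, ← Matrix.map_mul, hpow]

theorem map_pow_mulVec_mem_sup
    (hD : ∀ i j, (A.map f * D) i j ≡ (D * E) i j [SMOD I])
    (hv : ∀ i, f (v i) ≡ (D *ᵥ w) i [SMOD I]) (n : ℕ) (i : m) :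
    f ((A ^ n *ᵥ v) i) ∈ I ⊔ Ideal.span (Set.range (E ^ n *ᵥ w)) := by
  have hdiff : f ((A ^ n *ᵥ v) i) - (D *ᵥ (E ^ n *ᵥ w)) i ∈ I :=
    SModEq.sub_mem.mp (map_pow_mulVec_smodEq hD hv n i)
  have hspan : (D *ᵥ (E ^ n *ᵥ w)) i ∈ Ideal.span (Set.range (E ^ n *ᵥ w)) :=
    Ideal.mem_span_range_iff_exists_fun.mpr ⟨D i, rfl⟩
  simpa only [sub_add_cancel] using Submodule.add_mem_sup hdiff hspan

end Intertwining

section CyclicIdentities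

variable {S : Type*} [CommRing S]

/-- The Källén function, which gives `φ ρ` at `(q₁, q₂, q₃)` and `φ σ₂` at `(ℓ₁, ℓ₂, ℓ₃)`. -/
def kallen (x y z : S) : S :=
  x ^ 2 + y ^ 2 + z ^ 2 - 2 * (x * y + x * z + y * z)

/-- The determinant with rows `(1, 1, 1)`, `(x₁, x₂, x₃)` and `(y₁, y₂, y₃)`, which gives `φ τ` at
`(q₁, q₂, q₃, ℓ₁, ℓ₂, ℓ₃)`. -/
def onesDet (x₁ x₂ x₃ y₁ y₂ y₃ : S) : S :=
  y₁ * (x₃ - x₂) + y₂ * (x₁ - x₃) + y₃ * (x₂ - x₁)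

/-- The entry in the first row of `intertwiner` and the column belonging to `(q₁, ℓ₁)`; rotating the
arguments cyclically gives the entries in the columns of `(q₂, ℓ₂)` and `(q₃, ℓ₃)`. -/
def firstRowEntry (q₁ q₂ q₃ ℓ₁ ℓ₂ ℓ₃ : S) : S :=
  6 * kallen q₁ q₂ q₃ + ℓ₁ ^ 2 + 5 * ℓ₁ * (q₃ - q₂) + q₁ * (ℓ₂ - ℓ₃)

section Halves

variable (𝕜 : Type*) [Field 𝕜] [CharZero 𝕜] [Algebra 𝕜 S]

theorem quarter_mul_kallen_sub_sq (x y z : S) :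
    algebraMap 𝕜 S (1 / 4) * (kallen x y z - (x + y + z) ^ 2) = -(x * y + x * z + y * z) := by
  simp only [kallen]
  algebra

theorem half_mul_kallen_add_sq (x y z : S) :
    algebraMap 𝕜 S (1 / 2) * (kallen x y z + (x + y + z) ^ 2) = x ^ 2 + y ^ 2 + z ^ 2 := by
  simp only [kallen]
  algebra

end Halves

variable {I : Ideal S} {q₁ q₂ q₃ ℓ₁ ℓ₂ ℓ₃ : S}

theorem smodEq_of_sub_eq_combination {x y r₁ r₂ r₃ : S} (c₁ c₂ c₃ : S)
    (h : x - y = c₁ * r₁ + c₂ * r₂ + c₃ * r₃) (h₁ : r₁ ∈ I) (h₂ : r₂ ∈ I) (h₃ : r₃ ∈ I) :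
    x ≡ y [SMOD I] := by
  rw [SModEq.sub_mem, h]
  exact add_mem (add_mem (I.mul_mem_left c₁ h₁) (I.mul_mem_left c₂ h₂)) (I.mul_mem_left c₃ h₃)

theorem onesDet_sq_smodEq (h₁ : q₁ * ℓ₁ ∈ I) (h₂ : q₂ * ℓ₂ ∈ I) (h₃ : q₃ * ℓ₃ ∈ I) :
    onesDet q₁ q₂ q₃ ℓ₁ ℓ₂ ℓ₃ ^ 2 ≡ kallen q₁ q₂ q₃ * kallen ℓ₁ ℓ₂ ℓ₃ [SMOD I] := by
  refine smodEq_of_sub_eq_combination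
    (2 * (q₁ * ℓ₂ + q₁ * ℓ₃ + q₂ * ℓ₁ + q₃ * ℓ₁ - q₃ * ℓ₂ - q₂ * ℓ₃)
      - q₁ * ℓ₁ - 6 * (q₂ * ℓ₂ + q₃ * ℓ₃))
    (2 * (q₂ * ℓ₁ + q₂ * ℓ₃ + q₁ * ℓ₂ + q₃ * ℓ₂ - q₃ * ℓ₁ - q₁ * ℓ₃) - q₂ * ℓ₂ - 6 * (q₃ * ℓ₃))
    (2 * (q₃ * ℓ₁ + q₃ * ℓ₂ + q₁ * ℓ₃ + q₂ * ℓ₃ - q₂ * ℓ₁ - q₁ * ℓ₂) - q₃ * ℓ₃) ?_ h₁ h₂ h₃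
  simp only [onesDet, kallen]
  ring

theorem onesDet_mul_prod_smodEq (h₁ : q₁ * ℓ₁ ∈ I) (h₂ : q₂ * ℓ₂ ∈ I) (h₃ : q₃ * ℓ₃ ∈ I) :
    onesDet q₁ q₂ q₃ ℓ₁ ℓ₂ ℓ₃ * (ℓ₁ * ℓ₂ * ℓ₃) ≡ 0 [SMOD I] := by
  refine smodEq_of_sub_eq_combination (ℓ₂ * ℓ₃ * (ℓ₂ - ℓ₃)) (ℓ₁ * ℓ₃ * (ℓ₃ - ℓ₁))
    (ℓ₁ * ℓ₂ * (ℓ₁ - ℓ₂)) ?_ h₁ h₂ h₃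
  simp only [onesDet]
  ring

theorem kallen_mul_prod_smodEq (h₁ : q₁ * ℓ₁ ∈ I) (h₂ : q₂ * ℓ₂ ∈ I) (h₃ : q₃ * ℓ₃ ∈ I) :
    kallen q₁ q₂ q₃ * (ℓ₁ * ℓ₂ * ℓ₃) ≡ 0 [SMOD I] := by
  refine smodEq_of_sub_eq_combination ((q₁ - 2 * q₂ - 2 * q₃) * ℓ₂ * ℓ₃)
    ((q₂ - 2 * q₃) * ℓ₁ * ℓ₃) (q₃ * ℓ₁ * ℓ₂) ?_ h₁ h₂ h₃
  simp only [kallen]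
  ring

theorem firstRow_smodEq (b : S) (h₁ : q₁ * ℓ₁ ∈ I) (h₂ : q₂ * ℓ₂ ∈ I) (h₃ : q₃ * ℓ₃ ∈ I) :
    (b + (ℓ₁ + ℓ₂ + ℓ₃)) * firstRowEntry q₁ q₂ q₃ ℓ₁ ℓ₂ ℓ₃ +
        (9 * kallen q₁ q₂ q₃ - (ℓ₁ * ℓ₂ + ℓ₁ * ℓ₃ + ℓ₂ * ℓ₃) + 3 * onesDet q₁ q₂ q₃ ℓ₁ ℓ₂ ℓ₃) *
          (ℓ₁ + 2 * (q₃ - q₂)) +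
        ℓ₁ * ℓ₂ * ℓ₃ ≡
      (ℓ₁ + ℓ₂ + ℓ₃) * (q₁ * (q₁ - 5 * (q₂ + q₃))) +
        firstRowEntry q₁ q₂ q₃ ℓ₁ ℓ₂ ℓ₃ * (ℓ₁ + b + 3 * (q₃ - q₂)) +
        firstRowEntry q₂ q₃ q₁ ℓ₂ ℓ₃ ℓ₁ * q₁ - firstRowEntry q₃ q₁ q₂ ℓ₃ ℓ₁ ℓ₂ * q₁
      [SMOD I] := by
  refine smodEq_of_sub_eq_combination (8 * q₁ - 12 * q₂ - 12 * q₃ + 3 * ℓ₂ - 3 * ℓ₃)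
    (6 * q₂ - 10 * q₁ - 6 * q₃ - 3 * ℓ₁ + 2 * ℓ₃)
    (6 * q₃ - 10 * q₁ - 6 * q₂ + 3 * ℓ₁ - 2 * ℓ₂) ?_ h₁ h₂ h₃
  simp only [firstRowEntry, kallen, onesDet]
  ring

theorem secondRow_smodEq (𝕜 : Type*) [Field 𝕜] [CharZero 𝕜] [Algebra 𝕜 S] (b : S)
    (h₁ : q₁ * ℓ₁ ∈ I) (h₂ : q₂ * ℓ₂ ∈ I) (h₃ : q₃ * ℓ₃ ∈ I) :
    (b + algebraMap 𝕜 S (1 / 2) * (ℓ₁ + ℓ₂ + ℓ₃)) * (3 * kallen q₁ q₂ q₃ + ℓ₁ * (q₃ - q₂)) +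
        (4 * kallen q₁ q₂ q₃ + algebraMap 𝕜 S (1 / 2) * onesDet q₁ q₂ q₃ ℓ₁ ℓ₂ ℓ₃) *
          (ℓ₁ + 2 * (q₃ - q₂)) +
        kallen q₁ q₂ q₃ * (q₃ - q₂) -
        algebraMap 𝕜 S (1 / 2) * (ℓ₁ + ℓ₂ + ℓ₃) * kallen q₁ q₂ q₃ ≡
      (3 * kallen q₁ q₂ q₃ + ℓ₁ * (q₃ - q₂)) * (ℓ₁ + b + 3 * (q₃ - q₂)) +
        (3 * kallen q₁ q₂ q₃ + ℓ₂ * (q₁ - q₃)) * q₁ -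
        (3 * kallen q₁ q₂ q₃ + ℓ₃ * (q₂ - q₁)) * q₁
      [SMOD I] := by
  refine smodEq_of_sub_eq_combination
    (2 * q₁ - 4 * q₂ - 4 * q₃ + algebraMap 𝕜 S (1 / 2) * (ℓ₂ - ℓ₃))
    (q₂ - 3 * q₁ - q₃ - algebraMap 𝕜 S (1 / 2) * ℓ₁)
    (q₃ - 3 * q₁ - q₂ + algebraMap 𝕜 S (1 / 2) * ℓ₁) ?_ h₁ h₂ h₃
  simp only [kallen, onesDet]
  algebra

end CyclicIdentities

/-- The ideal `(q₁ℓ₁, q₂ℓ₂, q₃ℓ₃)` of `ℂ[b,q₁,q₂,q₃,ℓ₁,ℓ₂,ℓ₃]`. -/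
def qlIdeal : Ideal P7 :=
  Ideal.span {X 1 * X 4, X 2 * X 5, X 3 * X 6}

/-- The matrix `D` with `φ(A) D ≡ D E` modulo `qlIdeal` and `φ(G₁) = D r₁`. As the last three rows
of `A` express `d₁`, `d₂` and `d₃` through `d₄` and `d₅` (namely `d₅ E = d₃ + d₄ + b d₅`,
`d₄ E = d₂ + b d₄` and `d₃ E = d₁ + b d₃`), its last two rows determine the others. -/
def intertwiner : Matrix (Fin 5) (Fin 4) P7 :=
  !![X 4 + X 5 + X 6, firstRowEntry (X 1) (X 2) (X 3) (X 4) (X 5) (X 6),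
      firstRowEntry (X 2) (X 3) (X 1) (X 5) (X 6) (X 4),
      firstRowEntry (X 3) (X 1) (X 2) (X 6) (X 4) (X 5);
    0, 3 * φ ρ + X 4 * (X 3 - X 2), 3 * φ ρ + X 5 * (X 1 - X 3), 3 * φ ρ + X 6 * (X 2 - X 1);
    2, X 4 + 2 * (X 3 - X 2), X 5 + 2 * (X 1 - X 3), X 6 + 2 * (X 2 - X 1);
    1, X 3 - X 2, X 1 - X 3, X 2 - X 1;
    0, 1, 1, 1]

theorem mul_mem_qlIdeal :
    X 1 * X 4 ∈ qlIdeal ∧ X 2 * X 5 ∈ qlIdeal ∧ X 3 * X 6 ∈ qlIdeal :=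
  ⟨Ideal.subset_span (by simp), Ideal.subset_span (by simp), Ideal.subset_span (by simp)⟩

theorem Jtgt_eq_sup (n : ℕ) : Jtgt n = qlIdeal ⊔ Ideal.span (Set.range (Rv n)) :=
  Ideal.span_union _ _

theorem φ_X_zero : φ (X 0) = X 0 := by
  simp [φ]

theorem φ_σ₁ : φ σ₁ = X 4 + X 5 + X 6 := by
  simp [φ, σ₁]

theorem φ_ρ : φ ρ = kallen (X 1) (X 2) (X 3) := by
  simp [φ, ρ, kallen]

theorem φ_σ₂ : φ σ₂ = kallen (X 4) (X 5) (X 6) := by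
  simp [φ, σ₂, kallen]

theorem φ_τ : φ τ = onesDet (X 1) (X 2) (X 3) (X 4) (X 5) (X 6) := by
  simp [φ, τ, onesDet]

theorem φ_σ₃ : φ σ₃ = X 4 * X 5 * X 6 := by
  simp [φ, σ₃]

theorem A5_map_φ :
    A5.map φ =
      !![X 0 + (X 4 + X 5 + X 6), 0,
          9 * φ ρ - (X 4 * X 5 + X 4 * X 6 + X 5 * X 6) + 3 * φ τ, 0, X 4 * X 5 * X 6;
        0, X 0 + C (1 / 2) * (X 4 + X 5 + X 6), 4 * φ ρ + C (1 / 2) * φ τ, φ ρ,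
          -(C (1 / 2) * (X 4 + X 5 + X 6) * φ ρ);
        1, 0, X 0, 0, 0;
        0, 1, 0, X 0, 0;
        0, 0, 1, 1, X 0] := by
  have he₂ := quarter_mul_kallen_sub_sq ℂ (X 4 : P7) (X 5) (X 6)
  rw [MvPolynomial.algebraMap_eq] at he₂
  ext1 i j
  fin_cases i <;> fin_cases j <;>
    simp [A5, φ_X_zero, φ_σ₁, φ_σ₂, φ_σ₃, algHom_C, map_ofNat, -one_div, he₂, -neg_add_rev,
      ← sub_eq_add_neg]

theorem φ_comp_G1 : φ ∘ G1 = intertwiner *ᵥ ![X 0, 1, 1, 1] := by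
  have hp₂ := half_mul_kallen_add_sq ℂ (X 4 : P7) (X 5) (X 6)
  rw [MvPolynomial.algebraMap_eq] at hp₂
  ext1 i
  fin_cases i <;>
    simp [G1, intertwiner, -one_div, Matrix.mulVec_cons, φ_X_zero, φ_σ₁, φ_σ₂, hp₂, map_ofNat]
  · simp only [firstRowEntry, φ_ρ, φ_τ, onesDet, kallen]; ring
  · simp only [φ_τ, onesDet]; ring
  · ring
  · ring

theorem A5_mul_intertwiner_zero_smodEq (j : Fin 4) :
    (A5.map φ * intertwiner) 0 j ≡ (intertwiner * E4) 0 j [SMOD qlIdeal] := by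
  obtain ⟨h₁, h₂, h₃⟩ := mul_mem_qlIdeal
  rw [A5_map_φ, SModEq.sub_mem]
  match j with
  | 0 =>
    convert qlIdeal.zero_mem using 1
    simp [E4, intertwiner, Matrix.mul_apply, Fin.sum_univ_succ, φ_ρ, φ_τ, firstRowEntry, kallen,
      onesDet]
    ring
  | 1 =>
    convert SModEq.sub_mem.mp (firstRow_smodEq (X 0) h₁ h₂ h₃) using 2 <;>
      simp [E4, intertwiner, Matrix.mul_apply, Fin.sum_univ_succ, φ_ρ, φ_τ] <;> ring
  | 2 =>
    convert SModEq.sub_mem.mp (firstRow_smodEq (X 0) h₂ h₃ h₁) using 2 <;>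
      simp [E4, intertwiner, Matrix.mul_apply, Fin.sum_univ_succ, φ_ρ, φ_τ, kallen, onesDet] <;>
      ring
  | 3 =>
    convert SModEq.sub_mem.mp (firstRow_smodEq (X 0) h₃ h₁ h₂) using 2 <;>
      simp [E4, intertwiner, Matrix.mul_apply, Fin.sum_univ_succ, φ_ρ, φ_τ, kallen, onesDet] <;>
      ring

theorem A5_mul_intertwiner_one_smodEq (j : Fin 4) :
    (A5.map φ * intertwiner) 1 j ≡ (intertwiner * E4) 1 j [SMOD qlIdeal] := by
  obtain ⟨h₁, h₂, h₃⟩ := mul_mem_qlIdeal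
  rw [A5_map_φ, SModEq.sub_mem]
  match j with
  | 0 =>
    convert qlIdeal.zero_mem using 1
    have hhalf : (C (1 / 2) : P7) * 2 = 1 := by
      rw [← map_ofNat C, ← map_mul]
      norm_num
    simp [E4, intertwiner, Matrix.mul_apply, Fin.sum_univ_succ, φ_ρ, φ_τ, kallen, onesDet, -one_div]
    linear_combination
      (X 4 * (X 3 - X 2) + X 5 * (X 1 - X 3) + X 6 * (X 2 - X 1) : P7) * hhalf
  | 1 =>
    convert SModEq.sub_mem.mp (secondRow_smodEq ℂ (X 0) h₁ h₂ h₃) using 2 <;>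
      simp [E4, intertwiner, Matrix.mul_apply, Fin.sum_univ_succ, φ_ρ, φ_τ, -one_div] <;> ring
  | 2 =>
    convert SModEq.sub_mem.mp (secondRow_smodEq ℂ (X 0) h₂ h₃ h₁) using 2 <;>
      simp [E4, intertwiner, Matrix.mul_apply, Fin.sum_univ_succ, φ_ρ, φ_τ, kallen, onesDet,
        -one_div] <;> ring
  | 3 =>
    convert SModEq.sub_mem.mp (secondRow_smodEq ℂ (X 0) h₃ h₁ h₂) using 2 <;>
      simp [E4, intertwiner, Matrix.mul_apply, Fin.sum_univ_succ, φ_ρ, φ_τ, kallen, onesDet,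
        -one_div] <;> ring

theorem A5_mul_intertwiner_of_two_le {i : Fin 5} (hi : 2 ≤ i) (j : Fin 4) :
    (A5.map φ * intertwiner) i j = (intertwiner * E4) i j := by
  rw [A5_map_φ]
  fin_cases i <;> fin_cases j <;> simp at hi <;>
    simp [E4, intertwiner, Matrix.mul_apply, Fin.sum_univ_succ, firstRowEntry, φ_ρ, kallen] <;> ring

theorem A5_mul_intertwiner_smodEq (i : Fin 5) (j : Fin 4) :
    (A5.map φ * intertwiner) i j ≡ (intertwiner * E4) i j [SMOD qlIdeal] := by
  match i with
  | 0 => exact A5_mul_intertwiner_zero_smodEq j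
  | 1 => exact A5_mul_intertwiner_one_smodEq j
  | 2 | 3 | 4 => rw [A5_mul_intertwiner_of_two_le (by decide)]

theorem φ_G_mem_Jtgt (n : ℕ) (i : Fin 5) : φ (G n i) ∈ Jtgt n := by
  rw [Jtgt_eq_sup]
  exact map_pow_mulVec_mem_sup (f := (φ : R6 →+* P7)) A5_mul_intertwiner_smodEq
    (fun i => congrFun φ_comp_G1 i ▸ SModEq.rfl) n i

theorem φ_relation_mem_qlIdeal {x : R6} (hx : x ∈ ({τ ^ 2 - ρ * σ₂, τ * σ₃, ρ * σ₃} : Set R6)) :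
    φ x ∈ qlIdeal := by
  obtain ⟨h₁, h₂, h₃⟩ := mul_mem_qlIdeal
  rcases hx with rfl | rfl | rfl
  · simpa only [map_sub, map_pow, map_mul, φ_τ, φ_ρ, φ_σ₂] using
      SModEq.sub_mem.mp (onesDet_sq_smodEq h₁ h₂ h₃)
  · simpa only [map_mul, φ_τ, φ_σ₃] using SModEq.zero.mp (onesDet_mul_prod_smodEq h₁ h₂ h₃)
  · simpa only [map_mul, φ_ρ, φ_σ₃] using SModEq.zero.mp (kallen_mul_prod_smodEq h₁ h₂ h₃)

theorem Isrc_le_comap (n : ℕ) : Isrc n ≤ (Jtgt n).comap φ := by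
  refine Ideal.span_le.mpr ?_
  rintro x (hx | ⟨i, rfl⟩)
  · exact Jtgt_eq_sup n ▸ Ideal.mem_sup_left (φ_relation_mem_qlIdeal hx)
  · exact φ_G_mem_Jtgt n i

/-- For every `n ≥ 0`, the image under `φ` of the ideal
`(τ²−ρσ₂, τσ₃, ρσ₃, G_{n+1})` is contained in the ideal `(q₁ℓ₁, q₂ℓ₂, q₃ℓ₃, R_{n+1})`;
consequently `φ` induces a `ℂ`-algebra homomorphism between the quotients. -/
theorem stmt8 (n : ℕ) :
    (∀ x ∈ Isrc n, φ x ∈ Jtgt n) ∧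
    ∃ ψ : (R6 ⧸ Isrc n) →ₐ[ℂ] (P7 ⧸ Jtgt n),
      ∀ x : R6, ψ (Ideal.Quotient.mk (Isrc n) x) = Ideal.Quotient.mk (Jtgt n) (φ x) := by
  have hle : Isrc n ≤ (Jtgt n).comap φ := Isrc_le_comap n
  exact ⟨fun _ hx => hle hx, Ideal.quotientMapₐ (Jtgt n) φ hle, fun _ => rfl⟩

end
end

section
/- The ℂ-algebra homomorphism P → B/I sending b ↦ b, q_i ↦ q_i, ℓ_i ↦ ℓ̂_i is surjective, and its kernel is the ideal (q₁ℓ₁, q₂ℓ₂, q₃ℓ₃) + (the four components of R_{n+1}) of P; that is, it induces an isomorphism of ℂ-algebras P/(q₁ℓ₁, q₂ℓ₂, q₃ℓ₃, R_{n+1}) ≅ B/I. -/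
open MvPolynomial

noncomputable section

/-! We write `n = m + 2` (so that `n ≥ 2` ranges over all allowed values as `m` ranges
over `ℕ`).  The polynomial ring `B` in `4n` variables has index type
`Fin 4 ⊕ (Fin (m+1) × Fin 4)`: `Sum.inl 0 = b`, `Sum.inl (i+1) = qᵢ` (`i = 1,2,3`), and
`Sum.inr (k, j)` is the `j`-th component of `r̂_{k+2}` (component `0` being `b_{k+2}`,
components `1,2,3` being `r_{k+2,1}, r_{k+2,2}, r_{k+2,3}`). -/

/-- The polynomial ring `B = ℂ[b, q₁,q₂,q₃, b₂,…,b_n, (r_{ν,i})]` in `4n` variables,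
`n = m + 2`. -/
abbrev B (m : ℕ) : Type := MvPolynomial (Fin 4 ⊕ (Fin (m + 1) × Fin 4)) ℂ

variable (m : ℕ)

/-- The variable `b`. -/
def bB : B m := X (Sum.inl 0)

/-- The variables `q₁, q₂, q₃` (indexed by `Fin 3`). -/
def qB (i : Fin 3) : B m := X (Sum.inl i.succ)

/-- The vector `r̂_{k+2} = (b_{k+2}, r_{k+2,1}, r_{k+2,2}, r_{k+2,3})ᵀ` of variables. -/
def rhat (k : Fin (m + 1)) (j : Fin 4) : B m := X (Sum.inr (k, j))

/-- `θ₁ = q₃−q₂`, `θ₂ = q₁−q₃`, `θ₃ = q₂−q₁`. -/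
def θB : Fin 3 → B m := ![qB m 2 - qB m 1, qB m 0 - qB m 2, qB m 1 - qB m 0]

/-- `ℓ̂ᵢ = r_{2,i} − 2b − 4θᵢ`. -/
def lhat (i : Fin 3) : B m := rhat m 0 i.succ - 2 * bB m - 4 * θB m i

/-- The 4×4 matrix `Ê` over `B`. -/
def Ehat : Matrix (Fin 4) (Fin 4) (B m) :=
  !![bB m, qB m 0 * (qB m 0 - 5 * (qB m 1 + qB m 2)),
       qB m 1 * (qB m 1 - 5 * (qB m 0 + qB m 2)),
       qB m 2 * (qB m 2 - 5 * (qB m 0 + qB m 1));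
     1, lhat m 0 + bB m + 3 * θB m 0, -qB m 1, qB m 2;
     1, qB m 0, lhat m 1 + bB m + 3 * θB m 1, -qB m 2;
     1, -qB m 0, qB m 1, lhat m 2 + bB m + 3 * θB m 2]

/-- `r̂₁ = (b,1,1,1)ᵀ`. -/
def r1hat : Fin 4 → B m := ![bB m, 1, 1, 1]

/-- The correction vector `(0, q₁ℓ̂₁, q₂ℓ̂₂, q₃ℓ̂₃)ᵀ`. -/
def extra : Fin 4 → B m := ![0, qB m 0 * lhat m 0, qB m 1 * lhat m 1, qB m 2 * lhat m 2]

/-- The ideal `I ⊆ B` generated by the four components of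
`r̂₂ − Ê·r̂₁ + (0, q₁ℓ̂₁, q₂ℓ̂₂, q₃ℓ̂₃)ᵀ`, the four components of `r̂_{ν+1} − Ê·r̂_ν` for
`2 ≤ ν ≤ n−1`, and the four components of `Ê·r̂_n`. -/
def IB : Ideal (B m) :=
  Ideal.span
    ((Set.range fun j : Fin 4 =>
        rhat m 0 j - (Ehat m).mulVec (r1hat m) j + extra m j) ∪
      (Set.range fun p : Fin m × Fin 4 =>
        rhat m p.1.succ p.2 - (Ehat m).mulVec (rhat m p.1.castSucc) p.2) ∪
      (Set.range fun j : Fin 4 => (Ehat m).mulVec (rhat m (Fin.last m)) j))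

/-- The `ℂ`-algebra homomorphism `P → B/I` sending `b ↦ b`, `qᵢ ↦ qᵢ`, `ℓᵢ ↦ ℓ̂ᵢ`. -/
def ψ : P7 →ₐ[ℂ] (B m ⧸ IB m) :=
  aeval ![Ideal.Quotient.mk (IB m) (bB m),
    Ideal.Quotient.mk (IB m) (qB m 0), Ideal.Quotient.mk (IB m) (qB m 1),
    Ideal.Quotient.mk (IB m) (qB m 2),
    Ideal.Quotient.mk (IB m) (lhat m 0), Ideal.Quotient.mk (IB m) (lhat m 1),
    Ideal.Quotient.mk (IB m) (lhat m 2)]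

/-! `ℓ̂ᵢ` is defined so that `r_{2,i}` equals the `i`-th component of `Ê·r̂₁` identically. The first
four relations of `I` therefore split into `r̂₂ = Ê·r̂₁` and `qᵢℓ̂ᵢ = 0`, and the remaining ones say
that `r̂_ν = Ê^{ν-1}·r̂₁` and `Êⁿ·r̂₁ = 0`. Hence a homomorphism out of `B/I` is the same thing as a
solution of `qᵢℓᵢ = 0`, `R_{n+1} = 0`, that is, a homomorphism out of
`P/(q₁ℓ₁, q₂ℓ₂, q₃ℓ₃, R_{n+1})`; eliminating the `r̂_ν` is inverse to `P → B/I`. -/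

section Specialization

variable {R S F : Type*} [CommRing R] [CommRing S] [FunLike F R S] [RingHomClass F R S]

/-- The matrix `E` with `(b, q₁, q₂, q₃, ℓ₁, ℓ₂, ℓ₃)` specialised to `x`; both `E` and `Ê` are
instances of it. -/
def matE (x : Fin 7 → R) : Matrix (Fin 4) (Fin 4) R :=
  !![x 0, x 1 * (x 1 - 5 * (x 2 + x 3)), x 2 * (x 2 - 5 * (x 1 + x 3)),
       x 3 * (x 3 - 5 * (x 1 + x 2));
     1, x 4 + x 0 + 3 * (x 3 - x 2), -x 2, x 3;
     1, x 1, x 5 + x 0 + 3 * (x 1 - x 3), -x 3;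
     1, -x 1, x 2, x 6 + x 0 + 3 * (x 2 - x 1)]

/-- The vector `R_{n+1} = Eⁿ·(b,1,1,1)ᵀ` with `(b, q₁, q₂, q₃, ℓ₁, ℓ₂, ℓ₃)` specialised to `x`;
as in `Rv`, the index is the exponent `n`. -/
def vecR (x : Fin 7 → R) (n : ℕ) : Fin 4 → R := (matE x ^ n).mulVec ![x 0, 1, 1, 1]

/-- The vector `(0, q₁ℓ₁, q₂ℓ₂, q₃ℓ₃)ᵀ` with `(b, q₁, q₂, q₃, ℓ₁, ℓ₂, ℓ₃)` specialised to `x`. -/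
def vecQL (x : Fin 7 → R) : Fin 4 → R := ![0, x 1 * x 4, x 2 * x 5, x 3 * x 6]

/-- The point `x = (b, q₁, q₂, q₃, ℓ₁, ℓ₂, ℓ₃)` solves the equations `qᵢℓᵢ = 0` and
`R_{n+1} = 0`. -/
def IsSolution (n : ℕ) (x : Fin 7 → R) : Prop := vecQL x = 0 ∧ vecR x n = 0

lemma map_matE (f : F) (x : Fin 7 → R) : (matE x).map f = matE (f ∘ x) := by
  ext i j
  fin_cases i <;> fin_cases j <;> simp [matE, map_ofNat]

lemma map_vecQL (f : F) (x : Fin 7 → R) : f ∘ vecQL x = vecQL (f ∘ x) := by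
  ext i
  fin_cases i <;> simp [vecQL]

lemma map_matE_mulVec (f : F) (x : Fin 7 → R) (v : Fin 4 → R) :
    f ∘ (matE x).mulVec v = (matE (f ∘ x)).mulVec (f ∘ v) := by
  ext i
  rw [← map_matE]
  exact (f : R →+* S).map_mulVec (matE x) v i

lemma vecR_zero (x : Fin 7 → R) : vecR x 0 = ![x 0, 1, 1, 1] := by
  simp [vecR]

lemma vecR_succ (x : Fin 7 → R) (n : ℕ) : vecR x (n + 1) = (matE x).mulVec (vecR x n) := by
  simp [vecR, pow_succ']

lemma vecR_one_succ (x : Fin 7 → R) (i : Fin 3) :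
    vecR x 1 i.succ = ![x 4 + 2 * x 0 + 4 * (x 3 - x 2), x 5 + 2 * x 0 + 4 * (x 1 - x 3),
      x 6 + 2 * x 0 + 4 * (x 2 - x 1)] i := by
  rw [vecR_succ, vecR_zero]
  fin_cases i <;> simp [matE, Matrix.mulVec, dotProduct, Fin.sum_univ_four] <;> ring

lemma map_vecR (f : F) (x : Fin 7 → R) (n : ℕ) : f ∘ vecR x n = vecR (f ∘ x) n := by
  induction n with
  | zero => ext i; fin_cases i <;> simp [vecR_zero]
  | succ n ih => rw [vecR_succ, map_matE_mulVec, ih, vecR_succ]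

end Specialization

lemma forall_eq_iff_zero_and_succ {α : Type*} {g : α → α} {u : ℕ → α}
    (hu : ∀ n, u (n + 1) = g (u n)) {m : ℕ} (r : Fin (m + 1) → α) :
    (∀ j, r j = u j) ↔ r 0 = u 0 ∧ ∀ j : Fin m, r j.succ = g (r j.castSucc) := by
  refine ⟨fun h => ⟨h 0, fun j => ?_⟩, fun ⟨h0, hs⟩ j => ?_⟩
  · rw [h, h, Fin.val_succ, Fin.val_castSucc, hu]
  · induction j using Fin.induction with
    | zero => exact h0
    | succ j ih => rw [hs, ih, Fin.val_succ, Fin.val_castSucc, hu]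

section Comparison

variable (k : Type*) [CommRing k]

/-- The polynomial ring `B` over an arbitrary coefficient ring `k`. -/
abbrev ChainRing : Type _ := MvPolynomial (Fin 4 ⊕ (Fin (m + 1) × Fin 4)) k

/-- The vector of variables `r̂_{j+2}` over `k`. -/
def chainVec (j : Fin (m + 1)) (i : Fin 4) : ChainRing m k := X (Sum.inr (j, i))

/-- The elements `(b, q₁, q₂, q₃, ℓ̂₁, ℓ̂₂, ℓ̂₃)` over `k`. -/
def chainPoint : Fin 7 → ChainRing m k :=
  let b := X (Sum.inl 0)
  let q₁ := X (Sum.inl 1)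
  let q₂ := X (Sum.inl 2)
  let q₃ := X (Sum.inl 3)
  ![b, q₁, q₂, q₃, chainVec m k 0 1 - 2 * b - 4 * (q₃ - q₂),
    chainVec m k 0 2 - 2 * b - 4 * (q₁ - q₃), chainVec m k 0 3 - 2 * b - 4 * (q₂ - q₁)]

/-- The ideal `I` over `k`; for `k = ℂ` it is definitionally equal to `IB m`. -/
def chainIdeal : Ideal (ChainRing m k) :=
  Ideal.span
    ((Set.range fun i : Fin 4 => chainVec m k 0 i -
        (matE (chainPoint m k)).mulVec ![chainPoint m k 0, 1, 1, 1] i +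
          vecQL (chainPoint m k) i) ∪
      (Set.range fun p : Fin m × Fin 4 => chainVec m k p.1.succ p.2 -
        (matE (chainPoint m k)).mulVec (chainVec m k p.1.castSucc) p.2) ∪
      (Set.range fun i : Fin 4 => (matE (chainPoint m k)).mulVec (chainVec m k (Fin.last m)) i))

/-- The ideal `(q₁ℓ₁, q₂ℓ₂, q₃ℓ₃, R_{n+1})` over `k`. -/
def solutionIdeal (n : ℕ) : Ideal (MvPolynomial (Fin 7) k) :=
  Ideal.span ({X 1 * X 4, X 2 * X 5, X 3 * X 6} ∪ Set.range (vecR X n))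

/-- The homomorphism `P → B/I` over `k`, sending `b ↦ b`, `qᵢ ↦ qᵢ`, `ℓᵢ ↦ ℓ̂ᵢ`. -/
def comparison : MvPolynomial (Fin 7) k →ₐ[k] ChainRing m k ⧸ chainIdeal m k :=
  aeval (Ideal.Quotient.mk (chainIdeal m k) ∘ chainPoint m k)

/-- The homomorphism `B → P` over `k` fixing `b` and the `qᵢ` and eliminating the variables
`r̂_ν`, which are replaced by `R_ν`. -/
def elimination : ChainRing m k →ₐ[k] MvPolynomial (Fin 7) k :=
  aeval (Sum.elim ![X 0, X 1, X 2, X 3] fun p => vecR X (p.1 + 1) p.2)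

variable {k} {S F : Type*} [CommRing S]

lemma solutionIdeal_le_ker_iff [FunLike F (MvPolynomial (Fin 7) k) S]
    [RingHomClass F (MvPolynomial (Fin 7) k) S] {n : ℕ} (f : F) :
    solutionIdeal k n ≤ RingHom.ker f ↔ IsSolution n (f ∘ X) := by
  rw [solutionIdeal, Ideal.span_le, Set.union_subset_iff, Set.range_subset_iff, IsSolution,
    ← map_vecR]
  refine and_congr ?_ funext_iff.symm
  simp [Set.insert_subset_iff, funext_iff, Fin.forall_fin_succ, vecQL]

lemma chainVec_zero_succ (i : Fin 3) :
    chainVec m k 0 i.succ = vecR (chainPoint m k) 1 i.succ := by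
  rw [vecR_one_succ]
  fin_cases i <;> simp [chainPoint] <;> ring

variable {m} [FunLike F (ChainRing m k) S] [RingHomClass F (ChainRing m k) S]

lemma map_chainVec_zero_sub_add_eq_zero_iff (f : F) :
    f ∘ chainVec m k 0 - vecR (f ∘ chainPoint m k) 1 + vecQL (f ∘ chainPoint m k) = 0 ↔
      vecQL (f ∘ chainPoint m k) = 0 ∧ f ∘ chainVec m k 0 = vecR (f ∘ chainPoint m k) 1 := by
  refine ⟨fun h => ?_, fun ⟨hq, hr⟩ => by rw [hq, hr, sub_self, zero_add]⟩
  have hq : vecQL (f ∘ chainPoint m k) = 0 := by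
    ext i
    cases i using Fin.cases with
    | zero => rfl
    | succ i => simpa [chainVec_zero_succ, ← map_vecR] using congrFun h i.succ
  exact ⟨hq, by rwa [hq, add_zero, sub_eq_zero] at h⟩

lemma chainIdeal_le_ker_iff_relations (f : F) :
    chainIdeal m k ≤ RingHom.ker f ↔
      (f ∘ chainVec m k 0 - vecR (f ∘ chainPoint m k) 1 + vecQL (f ∘ chainPoint m k) = 0 ∧
        ∀ j : Fin m, f ∘ chainVec m k j.succ =
          (matE (f ∘ chainPoint m k)).mulVec (f ∘ chainVec m k j.castSucc)) ∧
      (matE (f ∘ chainPoint m k)).mulVec (f ∘ chainVec m k (Fin.last m)) = 0 := by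
  rw [chainIdeal, Ideal.span_le, Set.union_subset_iff, Set.union_subset_iff,
    Set.range_subset_iff, Set.range_subset_iff, Set.range_subset_iff, ← vecR_zero, ← vecR_succ]
  simp [funext_iff, ← map_vecR, ← map_vecQL, ← map_matE_mulVec, sub_eq_zero]

lemma chainIdeal_le_ker_iff (f : F) :
    chainIdeal m k ≤ RingHom.ker f ↔ IsSolution (m + 2) (f ∘ chainPoint m k) ∧
      ∀ j : Fin (m + 1), f ∘ chainVec m k j = vecR (f ∘ chainPoint m k) (j + 1) := by
  have hchain := forall_eq_iff_zero_and_succ (u := fun n => vecR (f ∘ chainPoint m k) (n + 1))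
    (fun n => vecR_succ _ (n + 1)) (fun j => f ∘ chainVec m k j)
  rw [chainIdeal_le_ker_iff_relations, map_chainVec_zero_sub_add_eq_zero_iff,
    and_assoc (a := vecQL _ = 0), ← hchain, IsSolution, and_right_comm, and_congr_left_iff]
  intro hR
  rw [hR, Fin.val_last, ← vecR_succ]

lemma elimination_chainVec (j : Fin (m + 1)) (i : Fin 4) :
    elimination m k (chainVec m k j i) = vecR X (j + 1) i := by
  simp [elimination, chainVec]

lemma elimination_comp_chainPoint : elimination m k ∘ chainPoint m k = X := by
  have hX (i : Fin 4) : elimination m k (X (Sum.inl i)) = ![X 0, X 1, X 2, X 3] i := by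
    simp [elimination]
  have h₁ := vecR_one_succ (X : Fin 7 → MvPolynomial (Fin 7) k) 0
  have h₂ := vecR_one_succ (X : Fin 7 → MvPolynomial (Fin 7) k) 1
  have h₃ := vecR_one_succ (X : Fin 7 → MvPolynomial (Fin 7) k) 2
  ext1 i
  fin_cases i <;> simp_all [chainPoint, elimination_chainVec, map_ofNat] <;> ring

lemma comparison_comp_X :
    comparison m k ∘ X = Ideal.Quotient.mk (chainIdeal m k) ∘ chainPoint m k := by
  ext1 i
  simp [comparison]

lemma mk_comp_chainVec (j : Fin (m + 1)) :
    Ideal.Quotient.mk (chainIdeal m k) ∘ chainVec m k j = vecR (comparison m k ∘ X) (j + 1) := by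
  rw [comparison_comp_X]
  exact ((chainIdeal_le_ker_iff _).1 Ideal.mk_ker.ge).2 j

lemma comparison_elimination (p : ChainRing m k) :
    comparison m k (elimination m k p) = Ideal.Quotient.mk (chainIdeal m k) p := by
  have h : (comparison m k).comp (elimination m k) = Ideal.Quotient.mkₐ k (chainIdeal m k) := by
    ext (i | ⟨j, i⟩)
    · fin_cases i <;> simp [elimination, comparison, chainPoint]
    · have hR := (congrFun (mk_comp_chainVec (k := k) j) i).symm
      simpa [elimination, chainVec, ← map_vecR] using hR
  exact DFunLike.congr_fun h p

lemma comparison_surjective : Function.Surjective (comparison m k) := by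
  refine .of_comp (g := elimination m k) ?_
  simpa only [Function.comp_def, comparison_elimination] using Ideal.Quotient.mk_surjective

lemma solutionIdeal_le_ker_comparison :
    solutionIdeal k (m + 2) ≤ RingHom.ker (comparison m k) := by
  rw [solutionIdeal_le_ker_iff, comparison_comp_X]
  exact ((chainIdeal_le_ker_iff _).1 Ideal.mk_ker.ge).1

lemma chainIdeal_le_comap_elimination :
    chainIdeal m k ≤ (solutionIdeal k (m + 2)).comap (elimination m k) := by
  let π := Ideal.Quotient.mkₐ k (solutionIdeal k (m + 2))
  let f := π.comp (elimination m k)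
  have hf : f ∘ chainPoint m k = π ∘ X := congrArg (π ∘ ·) elimination_comp_chainPoint
  have hI : chainIdeal m k ≤ RingHom.ker f := by
    rw [chainIdeal_le_ker_iff, hf]
    refine ⟨(solutionIdeal_le_ker_iff π).1 (Ideal.Quotient.mkₐ_ker k _).ge, fun j => ?_⟩
    rw [← map_vecR]
    exact congrArg (π ∘ ·) (funext (elimination_chainVec j))
  exact fun _ hp => Ideal.mem_comap.2 (Ideal.Quotient.eq_zero_iff_mem.1 (hI hp))

lemma ker_comparison_le : RingHom.ker (comparison m k) ≤ solutionIdeal k (m + 2) := by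
  have h : (Ideal.quotientMapₐ _ (elimination m k) chainIdeal_le_comap_elimination).comp
      (comparison m k) = Ideal.Quotient.mkₐ k (solutionIdeal k (m + 2)) := by
    ext i
    simpa [comparison] using congrArg _ (congrFun (elimination_comp_chainPoint (m := m)) i)
  intro p hp
  have hp' := DFunLike.congr_fun h p
  rw [AlgHom.comp_apply, hp, map_zero] at hp'
  exact Ideal.Quotient.eq_zero_iff_mem.1 hp'.symm

end Comparison

theorem stmt9_general (k : Type*) [CommRing k] (m : ℕ) :
    Function.Surjective (comparison m k) ∧
    RingHom.ker (comparison m k) = solutionIdeal k (m + 2) :=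
  ⟨comparison_surjective, ker_comparison_le.antisymm solutionIdeal_le_ker_comparison⟩

/-- For `n = m + 2 ≥ 2`, the `ℂ`-algebra homomorphism `P → B/I`
(`b ↦ b`, `qᵢ ↦ qᵢ`, `ℓᵢ ↦ ℓ̂ᵢ`) is surjective and its kernel is the ideal
`(q₁ℓ₁, q₂ℓ₂, q₃ℓ₃, R_{n+1})`; that is, it induces an isomorphism
`P/(q₁ℓ₁, q₂ℓ₂, q₃ℓ₃, R_{n+1}) ≅ B/I`. -/
theorem stmt9 (m : ℕ) :
    Function.Surjective (ψ m) ∧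
    RingHom.ker (ψ m) =
      Ideal.span ({X 1 * X 4, X 2 * X 5, X 3 * X 6} ∪ Set.range (Rv (m + 2))) := by
  have hψ : ψ m = comparison m ℂ := congrArg aeval (by funext i; fin_cases i <;> rfl)
  rw [hψ]
  exact stmt9_general ℂ m

end
end
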